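/- Under Assumptions 1–3, with Π = {π ∈ L²(μ; ℝ^m) : π(x) ∈ A for a.e. x} for a compact convex set A ⊆ ℝ^m and μ a finite measure, the dual optimal set Ω* nonempty, and well-defined ALaM iterates with ρᵏ eventually constant equal to ρ̄, every weak sequential cluster point π̄ of the policy sequence {πᵏ} lies in Π, is feasible (F(π̄) ≤ 0 a.e.), and is globally optimal for the constrained problem: for every π ∈ Π with F(π) ≤ 0 a.e., J(π) ≤ J(π̄). -/

import Mathlib

open MeasureTheory Filter
open scoped RealInnerProductSpace

lemma aux_inner_nonneg {α : Type*} [MeasurableSpace α] {μ : Measure α} (a b : Lp ℝ 2 μ)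
    (ha : 0 ≤ᵐ[μ] ⇑a) (hb : 0 ≤ᵐ[μ] ⇑b) : 0 ≤ ⟪a, b⟫ := by
  rw [L2.inner_def]
  apply integral_nonneg_of_ae
  filter_upwards [ha, hb] with x h1 h2
  simp only [Pi.zero_apply] at h1 h2 ⊢
  simpa using mul_nonneg h2 h1

lemma aux_posPart_inner {α : Type*} [MeasurableSpace α] {μ : Measure α} (w : Lp ℝ 2 μ) :
    ⟪Lp.posPart w, Lp.posPart w - w⟫ = 0 := by
  rw [L2.inner_def]
  apply integral_eq_zero_of_ae
  filter_upwards [Lp.coeFn_posPart w, Lp.coeFn_sub (Lp.posPart w) w] with x h1 h2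
  rw [h2, Pi.sub_apply, h1]
  rcases le_total (w x) 0 with h | h <;> simp [h]

lemma aux_posPart_nonneg {α : Type*} [MeasurableSpace α] {μ : Measure α} (w : Lp ℝ 2 μ) :
    0 ≤ᵐ[μ] ⇑(Lp.posPart w) := by
  filter_upwards [Lp.coeFn_posPart w] with x h1
  simp [h1]

lemma aux_posPart_sub_nonneg {α : Type*} [MeasurableSpace α] {μ : Measure α} (w : Lp ℝ 2 μ) :
    0 ≤ᵐ[μ] ⇑(Lp.posPart w - w) := by
  filter_upwards [Lp.coeFn_posPart w, Lp.coeFn_sub (Lp.posPart w) w] with x h1 h2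
  rw [h2, Pi.sub_apply, h1]
  simp

/-- if `u ≤ w + v` then `‖u₊‖ ≤ ‖w₊ + v‖`. -/
lemma aux_norm_le {α : Type*} [MeasurableSpace α] {μ : Measure α} (u w v : Lp ℝ 2 μ)
    (h : ∀ᵐ x ∂μ, u x ≤ w x + v x) : ‖Lp.posPart u‖ ≤ ‖Lp.posPart w + v‖ := by
  apply Lp.norm_le_norm_of_ae_le
  filter_upwards [h, Lp.coeFn_posPart u, Lp.coeFn_posPart w, Lp.coeFn_add (Lp.posPart w) v]
    with x h0 h1 h2 h3
  rw [h3, Pi.add_apply, h1, h2, Real.norm_eq_abs, Real.norm_eq_abs, abs_of_nonneg (le_max_right _ _)]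
  apply max_le _ (abs_nonneg _)
  refine le_trans ?_ (le_abs_self _)
  linarith [le_max_left (w x) 0]

lemma aux_closed {α : Type*} [MeasurableSpace α] {μ : Measure α} {m : ℕ}
    (A : Set (EuclideanSpace ℝ (Fin m))) (hA : IsClosed A) :
    IsClosed {π : Lp (EuclideanSpace ℝ (Fin m)) 2 μ | ∀ᵐ x ∂μ, π x ∈ A} := by
  apply IsSeqClosed.isClosed
  intro u p hu hp
  obtain ⟨ns, -, hns⟩ := (tendstoInMeasure_of_tendsto_Lp hp).exists_seq_tendsto_ae
  have hu' : ∀ᵐ x ∂μ, ∀ n, u n x ∈ A := ae_all_iff.2 hu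
  simp only [Set.mem_ofPred_eq]
  filter_upwards [hns, hu'] with x h1 h2
  exact hA.mem_of_tendsto h1 (Eventually.of_forall fun n => h2 _)

lemma aux_convex {α : Type*} [MeasurableSpace α] {μ : Measure α} {m : ℕ}
    (A : Set (EuclideanSpace ℝ (Fin m))) (hA : Convex ℝ A) :
    Convex ℝ {π : Lp (EuclideanSpace ℝ (Fin m)) 2 μ | ∀ᵐ x ∂μ, π x ∈ A} := by
  intro p hp q hq a b ha hb hab
  simp only [Set.mem_ofPred_eq] at hp hq ⊢
  filter_upwards [hp, hq, Lp.coeFn_add (a • p) (b • q), Lp.coeFn_smul a p, Lp.coeFn_smul b q]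
    with x h1 h2 h3 h4 h5
  rw [h3, Pi.add_apply, h4, h5]
  exact hA h1 h2 ha hb hab

lemma aux_weak_closed {E : Type*} [NormedAddCommGroup E] [InnerProductSpace ℝ E] [CompleteSpace E]
    (S : Set E) (hS : IsClosed S) (hc : Convex ℝ S) (u : ℕ → E) (p : E) (hu : ∀ n, u n ∈ S)
    (h : ∀ z, Tendsto (fun n => ⟪u n, z⟫) atTop (nhds ⟪p, z⟫)) : p ∈ S := by
  obtain ⟨v, hv, hvp⟩ := exists_norm_eq_iInf_of_complete_convex ⟨u 0, hu 0⟩ hS.isComplete hc p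
  have key := (norm_eq_iInf_iff_real_inner_le_zero hc hv).1 hvp
  have h1 : Tendsto (fun n => ⟪u n, p - v⟫ - ⟪v, p - v⟫) atTop
      (nhds (⟪p, p - v⟫ - ⟪v, p - v⟫)) := (h (p - v)).sub_const _
  have h2 : ⟪p, p - v⟫ - ⟪v, p - v⟫ ≤ 0 := by
    refine le_of_tendsto h1 (Eventually.of_forall fun n => ?_)
    have := key (u n) (hu n)
    rw [real_inner_comm, inner_sub_left] at this
    exact this
  rw [← inner_sub_left] at h2
  have h3 : p - v = 0 := by
    rw [real_inner_self_eq_norm_sq] at h2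
    exact norm_eq_zero.1 (pow_eq_zero_iff two_ne_zero |>.1 (le_antisymm h2 (sq_nonneg _)))
  rw [sub_eq_zero.1 h3]
  exact hv

lemma aux_small (a b : ℝ) (hb : 0 ≤ b) (h : ∀ t : ℝ, 0 < t → t ≤ 1 → 0 ≤ t * a + t ^ 2 * b) :
    0 ≤ a := by
  by_contra! ha
  have hpos : 0 < b - a := by linarith
  have h1 := h (-a / (b - a) / 2) (by apply div_pos (div_pos (by linarith) hpos); norm_num)
    (by rw [div_div, div_le_one (by linarith)]; linarith)
  set t := -a / (b - a) / 2 with ht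
  have htp : 0 < t := by apply div_pos (div_pos (by linarith) hpos); norm_num
  have e : t * (b - a) = -a / 2 := by rw [ht]; field_simp
  have h2 : 0 ≤ a + t * b := by
    by_contra! hn
    nlinarith
  nlinarith

/-- under Assumptions 1–3, with policy space
`Π = {π ∈ L²(μ; ℝ^m) : π(x) ∈ A a.e.}` for a compact convex `A ⊆ ℝ^m` and finite measure
`μ`, a nonempty dual optimal set, and well-defined ALaM iterates with penalty parameters
eventually constant equal to `ρ̄`, every weak sequential cluster point `π̄` of the policy
sequence `{πᵏ}` lies in `Π`, is feasible (`F(π̄) ≤ 0` a.e.), and is globally optimal for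
the constrained problem. -/
theorem stmt_1 {α : Type*} [MeasurableSpace α] {μ : Measure α} [IsFiniteMeasure μ] {m : ℕ}
    (A : Set (EuclideanSpace ℝ (Fin m))) (hAcompact : IsCompact A) (hAconv : Convex ℝ A)
    (J : Lp (EuclideanSpace ℝ (Fin m)) 2 μ → ℝ)
    (F : Lp (EuclideanSpace ℝ (Fin m)) 2 μ → Lp ℝ 2 μ)
    (Pi : Set (Lp (EuclideanSpace ℝ (Fin m)) 2 μ))
    (hPi : Pi = {π : Lp (EuclideanSpace ℝ (Fin m)) 2 μ | ∀ᵐ x ∂μ, π x ∈ A})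
    -- Assumption 1 (boundedness)
    (MJ MF : ℝ) (hMJ : ∀ π ∈ Pi, |J π| ≤ MJ) (hMF : ∀ π ∈ Pi, ‖F π‖ ≤ MF)
    -- Assumption 2 (strong continuity along weakly convergent sequences)
    (hcont : ∀ (πs : ℕ → Lp (EuclideanSpace ℝ (Fin m)) 2 μ)
      (π : Lp (EuclideanSpace ℝ (Fin m)) 2 μ), (∀ n, πs n ∈ Pi) → π ∈ Pi →
      (∀ z : Lp (EuclideanSpace ℝ (Fin m)) 2 μ,
        Tendsto (fun n => ⟪πs n, z⟫) atTop (nhds ⟪π, z⟫)) →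
      Tendsto (fun n => J (πs n)) atTop (nhds (J π)) ∧
        Tendsto (fun n => ‖F (πs n) - F π‖) atTop (nhds 0))
    -- Assumption 3 (convexity)
    (hJconc : ∀ π₁ ∈ Pi, ∀ π₂ ∈ Pi, ∀ t : ℝ, 0 ≤ t → t ≤ 1 →
      t * J π₁ + (1 - t) * J π₂ ≤ J (t • π₁ + (1 - t) • π₂))
    (hFconv : ∀ π₁ ∈ Pi, ∀ π₂ ∈ Pi, ∀ t : ℝ, 0 ≤ t → t ≤ 1 →
      ∀ᵐ x ∂μ, F (t • π₁ + (1 - t) • π₂) x ≤ t * F π₁ x + (1 - t) * F π₂ x)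
    -- dual function and nonempty dual optimal set
    (d : Lp ℝ 2 μ → ℝ)
    (hd : ∀ lam : Lp ℝ 2 μ, d lam = sInf ((fun π => -J π + ⟪lam, F π⟫) '' Pi))
    (hdualopt : ∃ lam : Lp ℝ 2 μ, (0 ≤ᵐ[μ] ⇑lam) ∧
      ∀ m' : Lp ℝ 2 μ, (0 ≤ᵐ[μ] ⇑m') → d m' ≤ d lam)
    -- ALaM iterates
    (lam : ℕ → Lp ℝ 2 μ) (πseq : ℕ → Lp (EuclideanSpace ℝ (Fin m)) 2 μ)
    (ρ : ℕ → ℝ) (ρ₀ ρmax : ℝ)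
    (hρ₀ : 0 < ρ₀) (hρ : ∀ k, ρ₀ ≤ ρ k ∧ ρ k ≤ ρmax)
    -- penalty parameters eventually constant equal to `ρ̄`
    (ρbar : ℝ) (K : ℕ) (hρconst : ∀ k ≥ K, ρ k = ρbar)
    (hlam0 : 0 ≤ᵐ[μ] ⇑(lam 0))
    (hπPi : ∀ k : ℕ, πseq (k + 1) ∈ Pi)
    (hπmin : ∀ k : ℕ, ∀ π ∈ Pi,
      -J (πseq (k + 1))
          + 1 / (2 * ρ k) * ‖Lp.posPart (lam k + ρ k • F (πseq (k + 1)))‖ ^ 2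
          - 1 / (2 * ρ k) * ‖lam k‖ ^ 2
        ≤ -J π + 1 / (2 * ρ k) * ‖Lp.posPart (lam k + ρ k • F π)‖ ^ 2
          - 1 / (2 * ρ k) * ‖lam k‖ ^ 2)
    (hlamupd : ∀ k : ℕ, lam (k + 1) = Lp.posPart (lam k + ρ k • F (πseq (k + 1)))) :
    -- every weak sequential cluster point of `{πᵏ}` is feasible and globally optimal
    ∀ (pibar : Lp (EuclideanSpace ℝ (Fin m)) 2 μ) (φ : ℕ → ℕ), StrictMono φ →
      (∀ z : Lp (EuclideanSpace ℝ (Fin m)) 2 μ,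
        Tendsto (fun j => ⟪πseq (φ j), z⟫) atTop (nhds ⟪pibar, z⟫)) →
      pibar ∈ Pi ∧ (∀ᵐ x ∂μ, F pibar x ≤ 0) ∧
        ∀ π ∈ Pi, (∀ᵐ x ∂μ, F π x ≤ 0) → J π ≤ J pibar := by
  have hconvPi : Convex ℝ Pi := hPi ▸ aux_convex A hAconv
  have hclosed : IsClosed Pi := hPi ▸ aux_closed A hAcompact.isClosed
  have hρpos : ∀ k, 0 < ρ k := fun k => lt_of_lt_of_le hρ₀ (hρ k).1
  have hlampos : ∀ k, 0 ≤ᵐ[μ] ⇑(lam k) := by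
    intro k
    cases k with
    | zero => exact hlam0
    | succ k => rw [hlamupd]; exact aux_posPart_nonneg _
  -- the new iterate minimises the ordinary Lagrangian at the new multiplier
  have hLmin : ∀ k, ∀ π ∈ Pi, -J (πseq (k + 1)) + ⟪lam (k + 1), F (πseq (k + 1))⟫
      ≤ -J π + ⟪lam (k + 1), F π⟫ := by
    intro k π hπ
    have hr := hρpos k
    set p := πseq (k + 1) with hp
    set w := lam k + ρ k • F p with hw
    have hl : lam (k + 1) = Lp.posPart w := hlamupd k
    set v := F π - F p with hv
    have := aux_small (J p - J π + ⟪lam (k + 1), v⟫) (ρ k / 2 * ‖v‖ ^ 2) (by positivity) (by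
      intro t ht ht1
      have hmem : t • π + (1 - t) • p ∈ Pi :=
        hconvPi hπ (hπPi k) ht.le (by linarith) (by ring)
      have h1 := hπmin k _ hmem
      have h2 := hJconc π hπ p (hπPi k) t ht.le ht1
      have h3 : ‖Lp.posPart (lam k + ρ k • F (t • π + (1 - t) • p))‖
          ≤ ‖Lp.posPart w + (t * ρ k) • v‖ := by
        apply aux_norm_le
        filter_upwards [hFconv π hπ p (hπPi k) t ht.le ht1,
          Lp.coeFn_add (lam k) (ρ k • F (t • π + (1 - t) • p)),
          Lp.coeFn_smul (ρ k) (F (t • π + (1 - t) • p)),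
          Lp.coeFn_add (lam k) (ρ k • F p), Lp.coeFn_smul (ρ k) (F p),
          Lp.coeFn_smul (t * ρ k) v, Lp.coeFn_sub (F π) (F p)] with x e0 e1 e2 e3 e4 e5 e6
        rw [e1, _root_.Pi.add_apply, e2, hw, e3, _root_.Pi.add_apply, e4, e5, _root_.Pi.smul_apply, _root_.Pi.smul_apply,
          _root_.Pi.smul_apply, hv, e6, _root_.Pi.sub_apply]
        simp only [smul_eq_mul]
        have := mul_le_mul_of_nonneg_left e0 hr.le
        linarith
      have h4 : ‖Lp.posPart (lam k + ρ k • F (t • π + (1 - t) • p))‖ ^ 2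
          ≤ ‖Lp.posPart w‖ ^ 2 + 2 * ((t * ρ k) * ⟪lam (k + 1), v⟫) + (t * ρ k) ^ 2 * ‖v‖ ^ 2 := by
        have := pow_le_pow_left₀ (norm_nonneg _) h3 2
        rw [norm_add_sq_real, real_inner_smul_right, norm_smul, mul_pow, Real.norm_eq_abs,
          sq_abs, ← hl] at this
        rw [← hl]
        exact this
      have h5 := mul_le_mul_of_nonneg_left h4 (by positivity : 0 ≤ 1 / (2 * ρ k))
      have h6 : 1 / (2 * ρ k) * (‖Lp.posPart w‖ ^ 2 + 2 * ((t * ρ k) * ⟪lam (k + 1), v⟫)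
          + (t * ρ k) ^ 2 * ‖v‖ ^ 2) = 1 / (2 * ρ k) * ‖Lp.posPart w‖ ^ 2
          + t * ⟪lam (k + 1), v⟫ + t ^ 2 * (ρ k / 2 * ‖v‖ ^ 2) := by
        field_simp
      rw [h6] at h5
      linarith)
    rw [hv, inner_sub_right] at this
    linarith
  obtain ⟨ls, hls0, hls⟩ := hdualopt
  -- the Fejér property
  have hbdd : ∀ l : Lp ℝ 2 μ, BddBelow ((fun π => -J π + ⟪l, F π⟫) '' Pi) := by
    intro l
    refine ⟨-MJ - ‖l‖ * MF, ?_⟩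
    rintro _ ⟨π, hπ, rfl⟩
    have h1 := abs_le.1 (hMJ π hπ)
    have h2 := abs_le.1 (abs_real_inner_le_norm l (F π))
    have h3 := mul_le_mul_of_nonneg_left (hMF π hπ) (norm_nonneg l)
    simp only
    linarith
  have hdk : ∀ k, d (lam (k + 1)) = -J (πseq (k + 1)) + ⟪lam (k + 1), F (πseq (k + 1))⟫ := by
    intro k
    rw [hd]
    apply IsLeast.csInf_eq
    refine ⟨⟨_, hπPi k, rfl⟩, ?_⟩
    rintro _ ⟨π, hπ, rfl⟩
    exact hLmin k π hπ
  have hinner : ∀ k, 0 ≤ ⟪ls - lam (k + 1), lam (k + 1) - lam k⟫ := by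
    intro k
    have h1 : d ls ≤ -J (πseq (k + 1)) + ⟪ls, F (πseq (k + 1))⟫ := by
      rw [hd]
      exact csInf_le (hbdd ls) ⟨_, hπPi k, rfl⟩
    have h2 := hls _ (hlampos (k + 1))
    rw [hdk] at h2
    have h3 : 0 ≤ ⟪ls - lam (k + 1), F (πseq (k + 1))⟫ := by
      rw [inner_sub_left]; linarith
    set w := lam k + ρ k • F (πseq (k + 1)) with hw
    have hl : lam (k + 1) = Lp.posPart w := hlamupd k
    have e : lam (k + 1) - lam k = (lam (k + 1) - w) + ρ k • F (πseq (k + 1)) := by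
      rw [hw]; abel
    rw [e, inner_add_right, real_inner_smul_right]
    have h4 : 0 ≤ ⟪ls - lam (k + 1), lam (k + 1) - w⟫ := by
      rw [inner_sub_left, hl, aux_posPart_inner, sub_zero]
      exact aux_inner_nonneg _ _ hls0 (aux_posPart_sub_nonneg w)
    have := mul_nonneg (hρpos k).le h3
    linarith
  have hfejer : ∀ k, ‖lam (k + 1) - lam k‖ ^ 2 ≤ ‖ls - lam k‖ ^ 2 - ‖ls - lam (k + 1)‖ ^ 2 := by
    intro k
    have e : ls - lam k = (ls - lam (k + 1)) + (lam (k + 1) - lam k) := by abel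
    rw [e, norm_add_sq_real]
    linarith [hinner k]
  have hanti : Antitone (fun k => ‖ls - lam k‖ ^ 2) := by
    apply antitone_nat_of_succ_le
    intro k
    linarith [hfejer k, sq_nonneg ‖lam (k + 1) - lam k‖]
  have hconv : Tendsto (fun k => ‖ls - lam k‖ ^ 2) atTop
      (nhds (⨅ k, ‖ls - lam k‖ ^ 2)) :=
    tendsto_atTop_ciInf hanti ⟨0, by rintro _ ⟨k, rfl⟩; positivity⟩
  have hdiff2 : Tendsto (fun k => ‖lam (k + 1) - lam k‖ ^ 2) atTop (nhds 0) := by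
    refine squeeze_zero (fun k => by positivity) hfejer ?_
    have := hconv.sub ((tendsto_add_atTop_iff_nat 1).2 hconv)
    simpa using this
  have hdiff : Tendsto (fun k => ‖lam (k + 1) - lam k‖) atTop (nhds 0) := by
    have := hdiff2.sqrt
    simpa [Real.sqrt_sq (norm_nonneg _)] using this
  have hlbd : ∀ k, ‖lam k‖ ≤ ‖ls‖ + ‖ls - lam 0‖ := by
    intro k
    have h1 : ‖ls - lam k‖ ≤ ‖ls - lam 0‖ :=
      (sq_le_sq₀ (norm_nonneg _) (norm_nonneg _)).1 (hanti (Nat.zero_le k))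
    have h2 : ‖lam k‖ ≤ ‖ls‖ + ‖ls - lam k‖ := by
      have := norm_sub_le ls (ls - lam k)
      simpa using this
    linarith
  -- asymptotic feasibility
  have hfeas : ∀ k, ‖Lp.posPart (F (πseq (k + 1)))‖ ≤ ρ₀⁻¹ * ‖lam (k + 1) - lam k‖ := by
    intro k
    have hr := hρpos k
    have h1 : ‖Lp.posPart (F (πseq (k + 1)))‖ ≤ ‖(ρ k)⁻¹ • (lam (k + 1) - lam k)‖ := by
      apply Lp.norm_le_norm_of_ae_le
      filter_upwards [Lp.coeFn_posPart (F (πseq (k + 1))),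
        Lp.coeFn_smul (ρ k)⁻¹ (lam (k + 1) - lam k), Lp.coeFn_sub (lam (k + 1)) (lam k),
        aux_posPart_sub_nonneg (lam k + ρ k • F (πseq (k + 1))),
        Lp.coeFn_sub (Lp.posPart (lam k + ρ k • F (πseq (k + 1))))
          (lam k + ρ k • F (πseq (k + 1))),
        Lp.coeFn_add (lam k) (ρ k • F (πseq (k + 1))),
        Lp.coeFn_smul (ρ k) (F (πseq (k + 1)))] with x e1 e2 e3 e4 e5 e6 e7
      rw [e5, _root_.Pi.sub_apply, e6, _root_.Pi.add_apply, e7, ← hlamupd k] at e4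
      simp only [_root_.Pi.zero_apply, _root_.Pi.smul_apply, smul_eq_mul] at e4
      rw [e1, e2, _root_.Pi.smul_apply, e3, _root_.Pi.sub_apply, smul_eq_mul, Real.norm_eq_abs, Real.norm_eq_abs,
        abs_of_nonneg (le_max_right _ _)]
      apply max_le _ (abs_nonneg _)
      refine le_trans ?_ (le_abs_self _)
      rw [inv_mul_eq_div, le_div_iff₀ hr]
      linarith
    rw [norm_smul, Real.norm_eq_abs, abs_of_pos (inv_pos.2 hr)] at h1
    refine h1.trans (mul_le_mul_of_nonneg_right ?_ (norm_nonneg _))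
    exact inv_anti₀ hρ₀ (hρ k).1
  -- asymptotic complementarity
  have hcomp : ∀ k, |⟪lam (k + 1), F (πseq (k + 1))⟫|
      ≤ ρ₀⁻¹ * ((‖ls‖ + ‖ls - lam 0‖) * ‖lam (k + 1) - lam k‖) := by
    intro k
    have hr := hρpos k
    have h1 := aux_posPart_inner (lam k + ρ k • F (πseq (k + 1)))
    rw [← hlamupd k] at h1
    have e : lam (k + 1) - (lam k + ρ k • F (πseq (k + 1)))
      = (lam (k + 1) - lam k) - ρ k • F (πseq (k + 1)) := by abel
    rw [e, inner_sub_right, real_inner_smul_right] at h1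
    have h2 : ⟪lam (k + 1), F (πseq (k + 1))⟫
        = (ρ k)⁻¹ * ⟪lam (k + 1), lam (k + 1) - lam k⟫ := by
      rw [inv_mul_eq_div, eq_div_iff hr.ne']
      linarith
    rw [h2, abs_mul, abs_of_pos (inv_pos.2 hr)]
    apply mul_le_mul (inv_anti₀ hρ₀ (hρ k).1) _ (abs_nonneg _) (inv_pos.2 hρ₀).le
    exact (abs_real_inner_le_norm _ _).trans
      (mul_le_mul_of_nonneg_right (hlbd _) (norm_nonneg _))
  have hcomp0 : Tendsto (fun k => ⟪lam (k + 1), F (πseq (k + 1))⟫) atTop (nhds 0) := by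
    refine squeeze_zero_norm (a := fun k => ρ₀⁻¹ * ((‖ls‖ + ‖ls - lam 0‖) * ‖lam (k + 1) - lam k‖))
      (fun k => hcomp k) ?_
    simpa using (hdiff.const_mul (‖ls‖ + ‖ls - lam 0‖)).const_mul ρ₀⁻¹
  have hfeas0 : Tendsto (fun k => ‖Lp.posPart (F (πseq (k + 1)))‖) atTop (nhds 0) := by
    refine squeeze_zero (fun k => norm_nonneg _) hfeas ?_
    simpa using hdiff.const_mul ρ₀⁻¹
  intro pibar φ hφ hweak
  -- shift the subsequence into the range of indices `k + 1`
  obtain ⟨ψ, hψ, hψφ⟩ : ∃ ψ : ℕ → ℕ, Tendsto ψ atTop atTop ∧ ∀ j, φ (j + 1) = ψ j + 1 := by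
    refine ⟨fun j => φ (j + 1) - 1, ?_, fun j => ?_⟩
    · refine tendsto_atTop_mono (fun j => ?_) tendsto_id
      have := hφ.id_le (j + 1)
      simp only [id] at this ⊢
      omega
    · have := hφ.id_le (j + 1)
      simp only [id] at this ⊢
      omega
  have hweak' : ∀ z : Lp (EuclideanSpace ℝ (Fin m)) 2 μ,
      Tendsto (fun j => ⟪πseq (ψ j + 1), z⟫) atTop (nhds ⟪pibar, z⟫) := by
    intro z
    have := (tendsto_add_atTop_iff_nat 1).2 (hweak z)
    simpa only [hψφ] using this
  have hmem : pibar ∈ Pi :=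
    aux_weak_closed Pi hclosed hconvPi (fun j => πseq (ψ j + 1)) pibar (fun j => hπPi _) hweak'
  obtain ⟨hJlim, hFlim⟩ := hcont (fun j => πseq (ψ j + 1)) pibar (fun j => hπPi _) hmem hweak'
  refine ⟨hmem, ?_, ?_⟩
  · have h1 : ‖Lp.posPart (F pibar)‖ ≤ 0 := by
      have hlim := (hfeas0.comp hψ).add hFlim
      rw [add_zero] at hlim
      refine ge_of_tendsto hlim (Eventually.of_forall fun j => ?_)
      have := aux_norm_le (F pibar) (F (πseq (ψ j + 1))) (F pibar - F (πseq (ψ j + 1))) (by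
        filter_upwards [Lp.coeFn_sub (F pibar) (F (πseq (ψ j + 1)))] with x hx
        rw [hx, _root_.Pi.sub_apply]; linarith)
      have h2 := this.trans (norm_add_le _ _)
      rw [norm_sub_rev (F pibar)] at h2
      exact h2
    have h2 : Lp.posPart (F pibar) = 0 := norm_le_zero_iff.1 h1
    have h3 := aux_posPart_sub_nonneg (F pibar)
    rw [h2, zero_sub] at h3
    filter_upwards [h3, Lp.coeFn_neg (F pibar)] with x e1 e2
    rw [e2] at e1
    simpa using e1
  · intro π hπ hπf
    have hlim := hJlim.neg.add (hcomp0.comp hψ)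
    have h1 : -J pibar + 0 ≤ -J π := by
      refine le_of_tendsto hlim (Eventually.of_forall fun j => ?_)
      have h2 := hLmin (ψ j) π hπ
      have h3 : 0 ≤ ⟪lam (ψ j + 1), -F π⟫ := by
        apply aux_inner_nonneg _ _ (hlampos _)
        filter_upwards [hπf, Lp.coeFn_neg (F π)] with x e1 e2
        rw [e2]
        simpa using e1
      rw [inner_neg_right] at h3
      simp only [Function.comp]
      linarith
    linarith
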